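/- Let A and B be tuples of complex numbers all of whose entries have real part of absolute value less than 1/16, with distinguished entries α̂ of A and β̂ of B, and write A′ = A minus α̂, B′ = B minus β̂. Then for every complex s with ℜs > 1/4, the double series Σ_{d≥1} Σ_{q≥1} μ(q) G_A(1−α̂, qd) G_B(1−β̂, qd) d^{−1−s} q^{−2+α̂+β̂} converges absolutely and equals ∏_{a∈A′, b∈B′} ζ(1+s+a+b) × ∏_p [ ∏_{a∈A′, b∈B′}(1 − p^{−1−a−b−s}) · Σ_{d≥0} Σ_{q=0}^{1} (−1)^q G_A(1−α̂, p^{d+q}) G_B(1−β̂, p^{d+q}) p^{−d−ds − q(2−α̂−β̂)} ], where the product over primes p converges absolutely. -/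

import Mathlib

open Complex

/-- Shifted divisor function: `tauSh A n = ∑_{n₁⋯n_k = n} n₁^{-α₁}⋯n_k^{-α_k}`,
defined by iterated Dirichlet convolution. -/
noncomputable def tauSh : List ℂ → ℕ → ℂ
  | [], n => if n = 1 then 1 else 0
  | a :: A, n => ∑ d ∈ n.divisors, (d : ℂ) ^ (-a) * tauSh A (n / d)

/-- `g_A(s,q) = ∏_{p ∣ q} ( ∏_{α∈A} (1 − p^{−s−α}) · ∑_{j≥0} τ_A(p^{j+q_p}) p^{−js} )`. -/
noncomputable def gSh (A : List ℂ) (s : ℂ) (q : ℕ) : ℂ :=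
  ∏ p ∈ q.primeFactors,
    ((A.map (fun α => 1 - (p : ℂ) ^ (-s - α))).prod *
      ∑' j : ℕ, tauSh A (p ^ (j + q.factorization p)) * (p : ℂ) ^ (-(j : ℂ) * s))

/-- `G_A(s,q) = ∑_{d∣q} (μ(d)/φ(d)) d^s ∑_{e∣d} (μ(e)/e^s) g_A(s, qe/d)`. -/
noncomputable def GSh (A : List ℂ) (s : ℂ) (q : ℕ) : ℂ :=
  ∑ d ∈ q.divisors, ((ArithmeticFunction.moebius d : ℂ) / (Nat.totient d : ℂ)) * (d : ℂ) ^ s *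
    ∑ e ∈ d.divisors, (ArithmeticFunction.moebius e : ℂ) / (e : ℂ) ^ s * gSh A s (q * e / d)


lemma natpow_cpow (p i : ℕ) (a : ℂ) : ((p ^ i : ℕ) : ℂ) ^ a = ((p : ℂ) ^ a) ^ i := by
  induction i with
  | zero => simp
  | succ i ih => rw [pow_succ, Nat.cast_mul, Complex.natCast_mul_natCast_cpow, ih, pow_succ]

lemma tau_one (A : List ℂ) : tauSh A 1 = 1 := by
  induction A with
  | nil => simp [tauSh]
  | cons a A ih => simp [tauSh, ih]

lemma tau_cons_pow {p : ℕ} (hp : p.Prime) (a : ℂ) (A : List ℂ) (m : ℕ) :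
    tauSh (a :: A) (p ^ m) =
      ∑ i ∈ Finset.range (m + 1), ((p : ℂ) ^ (-a)) ^ i * tauSh A (p ^ (m - i)) := by
  rw [tauSh, Nat.sum_divisors_prime_pow hp]
  refine Finset.sum_congr rfl fun i hi => ?_
  rw [natpow_cpow, Nat.pow_div (by simpa [Nat.lt_succ_iff] using hi) hp.pos]

lemma tau_succ {p : ℕ} (hp : p.Prime) (a : ℂ) (A : List ℂ) (m : ℕ) :
    tauSh (a :: A) (p ^ (m + 1)) =
      tauSh A (p ^ (m + 1)) + (p : ℂ) ^ (-a) * tauSh (a :: A) (p ^ m) := by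
  rw [tau_cons_pow hp, tau_cons_pow hp, Finset.sum_range_succ', Finset.mul_sum, add_comm]
  congr 1
  · simp
  · refine Finset.sum_congr rfl fun i _ => ?_
    rw [pow_succ, Nat.add_sub_add_right]; ring

lemma tau_mid {p : ℕ} (hp : p.Prime) (a : ℂ) (L M : List ℂ) (m : ℕ) :
    tauSh (L ++ a :: M) (p ^ (m + 1)) =
      tauSh (L ++ M) (p ^ (m + 1)) + (p : ℂ) ^ (-a) * tauSh (L ++ a :: M) (p ^ m) := by
  induction L generalizing m with
  | nil => exact tau_succ hp a M m
  | cons b L ih =>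
    simp only [List.cons_append]
    induction m with
    | zero =>
      rw [tau_succ hp, tau_succ hp, ih]
      simp only [pow_zero, tau_one]; ring
    | succ m ih2 =>
      linear_combination tau_succ hp b (L ++ a :: M) (m + 1) - tau_succ hp b (L ++ M) (m + 1)
        + ih (m + 1) + (p : ℂ) ^ (-b) * ih2 - (p : ℂ) ^ (-a) * tau_succ hp b (L ++ a :: M) m

lemma seq_bound (y : ℕ → ℝ) (M r ρ κ : ℝ) (hr : 0 < r) (hρ : ρ ≤ κ * r) (hM : 0 ≤ M)
    (hκ : κ < 1) (hκ0 : 0 ≤ κ) (hy : ∀ m, 0 ≤ y m) (h0 : y 0 ≤ 1)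
    (h : ∀ m, y (m + 1) ≤ M * r ^ (m + 1) + ρ * y m) (m : ℕ) :
    y m ≤ (1 + M / (1 - κ)) * r ^ m := by
  have hk : 0 < 1 - κ := by linarith
  have hC : M + κ * (1 + M / (1 - κ)) ≤ 1 + M / (1 - κ) := by
    have : M / (1 - κ) * (1 - κ) = M := by field_simp
    nlinarith
  induction m with
  | zero =>
    have : 0 ≤ M / (1 - κ) := by positivity
    simp; linarith
  | succ m ih =>
    have hr' : 0 < r ^ (m + 1) := by positivity
    calc y (m + 1) ≤ M * r ^ (m + 1) + ρ * y m := h m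
      _ ≤ M * r ^ (m + 1) + (κ * r) * y m := by
          have := mul_le_mul_of_nonneg_right hρ (hy m); linarith
      _ ≤ M * r ^ (m + 1) + κ * r * ((1 + M / (1 - κ)) * r ^ m) := by gcongr
      _ = (M + κ * (1 + M / (1 - κ))) * r ^ (m + 1) := by ring
      _ ≤ _ := mul_le_mul_of_nonneg_right hC hr'.le

lemma kap_lt : (2 : ℝ) ^ (-(1 / 32) : ℝ) < 1 :=
  Real.rpow_lt_one_of_one_lt_of_neg (by norm_num) (by norm_num)

lemma two_le_prime {p : ℕ} (hp : p.Prime) : (2 : ℝ) ≤ p := by exact_mod_cast hp.two_le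

lemma rho_le {p : ℕ} (hp : p.Prime) :
    (p : ℝ) ^ (1 / 16 : ℝ) ≤ (2 : ℝ) ^ (-(1 / 32) : ℝ) * (p : ℝ) ^ (3 / 32 : ℝ) := by
  have h2 := two_le_prime hp
  have : (p : ℝ) ^ (1 / 16 : ℝ) = (p : ℝ) ^ (-(1 / 32) : ℝ) * (p : ℝ) ^ (3 / 32 : ℝ) := by
    rw [← Real.rpow_add (by linarith)]; norm_num
  rw [this]
  exact mul_le_mul_of_nonneg_right (Real.rpow_le_rpow_of_nonpos (by norm_num) h2 (by norm_num))
    (by positivity)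

lemma norm_u_le {p : ℕ} (hp : p.Prime) {a : ℂ} (ha : |a.re| < 1 / 16) :
    ‖(p : ℂ) ^ (-a)‖ ≤ (p : ℝ) ^ (1 / 16 : ℝ) := by
  rw [Complex.norm_natCast_cpow_of_pos hp.pos]
  have h2 := two_le_prime hp
  apply Real.rpow_le_rpow_of_exponent_le (by linarith)
  have := abs_lt.1 ha
  simp; linarith

lemma tau_nil_pow {p : ℕ} (hp : p.Prime) (m : ℕ) : tauSh [] (p ^ m) = if m = 0 then 1 else 0 := by
  simp [tauSh, hp.ne_one]

lemma tau_bound (A : List ℂ) (hA : ∀ α ∈ A, |α.re| < 1 / 16) :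
    ∃ C : ℝ, 0 ≤ C ∧ ∀ p : ℕ, p.Prime → ∀ m : ℕ,
      ‖tauSh A (p ^ m)‖ ≤ C * ((p : ℝ) ^ (3 / 32 : ℝ)) ^ m := by
  induction A with
  | nil =>
    refine ⟨1, zero_le_one, fun p hp m => ?_⟩
    rw [tau_nil_pow hp]
    split_ifs with h
    · simp [h]
    · simp; positivity
  | cons a A ih =>
    obtain ⟨M, hM, h⟩ := ih fun α hα => hA α (by simp [hα])
    have hk := kap_lt
    refine ⟨1 + M / (1 - (2 : ℝ) ^ (-(1 / 32) : ℝ)), ?_, fun p hp m => ?_⟩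
    · have : 0 < 1 - (2 : ℝ) ^ (-(1 / 32) : ℝ) := by linarith
      positivity
    · have h2 := two_le_prime hp
      refine seq_bound (fun m => ‖tauSh (a :: A) (p ^ m)‖) M _ ((p : ℝ) ^ (1 / 16 : ℝ)) _
        (Real.rpow_pos_of_pos (by linarith) _) (rho_le hp) hM hk (by positivity)
        (fun _ => norm_nonneg _) (by simp [tau_one]) (fun m => ?_) m
      rw [tau_succ hp]
      refine (norm_add_le _ _).trans (add_le_add (h p hp _) ?_)
      rw [norm_mul]
      gcongr
      exact norm_u_le hp (hA a (by simp))

noncomputable def SS (p : ℕ) (A : List ℂ) (x : ℂ) (k : ℕ) : ℂ :=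
  ∑' j : ℕ, tauSh A (p ^ (j + k)) * x ^ j

lemma SS_summable {p : ℕ} (hp : p.Prime) (A : List ℂ) (hA : ∀ α ∈ A, |α.re| < 1 / 16)
    {x : ℂ} (hx : ‖x‖ ≤ (p : ℝ) ^ (-(15 / 16) : ℝ)) (k : ℕ) :
    Summable fun j : ℕ => tauSh A (p ^ (j + k)) * x ^ j := by
  obtain ⟨C, hC, h⟩ := tau_bound A hA
  have h2 := two_le_prime hp
  have hr : 0 ≤ (p : ℝ) ^ (3 / 32 : ℝ) := by positivity
  have h1 : (p : ℝ) ^ (3 / 32 : ℝ) * ‖x‖ < 1 := by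
    calc _ ≤ (p : ℝ) ^ (3 / 32 : ℝ) * (p : ℝ) ^ (-(15 / 16) : ℝ) := by gcongr
      _ = (p : ℝ) ^ (3 / 32 + -(15 / 16) : ℝ) := by rw [← Real.rpow_add (by linarith)]
      _ < 1 := Real.rpow_lt_one_of_one_lt_of_neg (by linarith) (by norm_num)
  refine Summable.of_norm_bounded (g := fun j : ℕ =>
    C * ((p : ℝ) ^ (3 / 32 : ℝ)) ^ k * ((p : ℝ) ^ (3 / 32 : ℝ) * ‖x‖) ^ j)
    ((summable_geometric_of_lt_one (by positivity) h1).mul_left _) fun j => ?_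
  rw [norm_mul, norm_pow]
  calc _ ≤ C * ((p : ℝ) ^ (3 / 32 : ℝ)) ^ (j + k) * ‖x‖ ^ j := by
        gcongr; exact h p hp _
    _ = _ := by rw [pow_add, mul_pow]; ring

lemma SS_mid {p : ℕ} (hp : p.Prime) (a : ℂ) (L M : List ℂ)
    (hA : ∀ α ∈ L ++ a :: M, |α.re| < 1 / 16)
    {x : ℂ} (hx : ‖x‖ ≤ (p : ℝ) ^ (-(15 / 16) : ℝ)) (k : ℕ) :
    SS p (L ++ a :: M) x (k + 1) =
      SS p (L ++ M) x (k + 1) + (p : ℂ) ^ (-a) * SS p (L ++ a :: M) x k := by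
  unfold SS
  have hA' : ∀ α ∈ L ++ M, |α.re| < 1 / 16 := fun α hα => hA α (by
    simp only [List.mem_append, List.mem_cons] at *; tauto)
  rw [← tsum_mul_left, ← (SS_summable hp _ hA' hx _).tsum_add
    ((SS_summable hp _ hA hx _).mul_left _)]
  refine tsum_congr fun j => ?_
  rw [← add_assoc, tau_mid hp]; ring

lemma SS_zero_cons {p : ℕ} (hp : p.Prime) (a : ℂ) (A : List ℂ)
    (hA : ∀ α ∈ a :: A, |α.re| < 1 / 16)
    {x : ℂ} (hx : ‖x‖ ≤ (p : ℝ) ^ (-(15 / 16) : ℝ)) :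
    (1 - x * (p : ℂ) ^ (-a)) * SS p (a :: A) x 0 = SS p A x 0 := by
  have hA' : ∀ α ∈ A, |α.re| < 1 / 16 := fun α hα => hA α (by simp [hα])
  have e1 (B : List ℂ) (hB : ∀ α ∈ B, |α.re| < 1 / 16) : SS p B x 0 = 1 + x * SS p B x 1 := by
    have := (SS_summable hp B hB hx 0).tsum_eq_zero_add
    unfold SS
    rw [this, ← tsum_mul_left]
    simp only [pow_zero, tau_one, mul_one, add_zero]
    congr 1
    exact tsum_congr fun j => by ring
  have e2 := SS_mid hp a [] A hA hx 0
  simp only [List.nil_append, zero_add] at e2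
  linear_combination e1 _ hA - e1 _ hA' + x * e2

noncomputable def FF (p : ℕ) (A : List ℂ) (x : ℂ) (k : ℕ) : ℂ :=
  (A.map fun α => 1 - x * (p : ℂ) ^ (-α)).prod * SS p A x k

lemma FF_nil {p : ℕ} (hp : p.Prime) (x : ℂ) (k : ℕ) :
    FF p [] x k = if k = 0 then 1 else 0 := by
  unfold FF SS
  rw [tsum_eq_single 0]
  · simp [tau_nil_pow hp]
  · intro j hj
    simp [tau_nil_pow hp, hj]

lemma FF_zero {p : ℕ} (hp : p.Prime) (A : List ℂ) (hA : ∀ α ∈ A, |α.re| < 1 / 16)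
    {x : ℂ} (hx : ‖x‖ ≤ (p : ℝ) ^ (-(15 / 16) : ℝ)) : FF p A x 0 = 1 := by
  induction A with
  | nil => simp [FF_nil hp]
  | cons a A ih =>
    have := ih fun α hα => hA α (by simp [hα])
    unfold FF at *
    rw [← SS_zero_cons hp a A hA hx] at this
    simp only [List.map_cons, List.prod_cons]
    linear_combination this

lemma FF_succ {p : ℕ} (hp : p.Prime) (a : ℂ) (A : List ℂ)
    (hA : ∀ α ∈ a :: A, |α.re| < 1 / 16)
    {x : ℂ} (hx : ‖x‖ ≤ (p : ℝ) ^ (-(15 / 16) : ℝ)) (k : ℕ) :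
    FF p (a :: A) x (k + 1) = (1 - x * (p : ℂ) ^ (-a)) * FF p A x (k + 1)
      + (p : ℂ) ^ (-a) * FF p (a :: A) x k := by
  have e2 := SS_mid hp a [] A hA hx k
  simp only [List.nil_append] at e2
  unfold FF
  rw [e2]
  simp only [List.map_cons, List.prod_cons]
  ring

lemma FF_bound (A : List ℂ) (hA : ∀ α ∈ A, |α.re| < 1 / 16) :
    ∃ C : ℝ, 0 ≤ C ∧ ∀ p : ℕ, p.Prime → ∀ x : ℂ, ‖x‖ ≤ (p : ℝ) ^ (-(15 / 16) : ℝ) → ∀ m : ℕ,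
      ‖FF p A x m‖ ≤ C * ((p : ℝ) ^ (3 / 32 : ℝ)) ^ m := by
  induction A with
  | nil =>
    refine ⟨1, zero_le_one, fun p hp x _ m => ?_⟩
    rw [FF_nil hp]
    split_ifs with h
    · simp [h]
    · simp; positivity
  | cons a A ih =>
    obtain ⟨M, hM, h⟩ := ih fun α hα => hA α (by simp [hα])
    have hk := kap_lt
    refine ⟨1 + (2 * M) / (1 - (2 : ℝ) ^ (-(1 / 32) : ℝ)), ?_, fun p hp x hx m => ?_⟩
    · have : 0 < 1 - (2 : ℝ) ^ (-(1 / 32) : ℝ) := by linarith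
      positivity
    · have h2 := two_le_prime hp
      have hu := norm_u_le hp (hA a (by simp))
      refine seq_bound (fun m => ‖FF p (a :: A) x m‖) (2 * M) _ ((p : ℝ) ^ (1 / 16 : ℝ)) _
        (Real.rpow_pos_of_pos (by linarith) _) (rho_le hp) (by positivity) hk (by positivity)
        (fun _ => norm_nonneg _) (by simp [FF_zero hp _ hA hx]) (fun m => ?_) m
      rw [FF_succ hp a A hA hx]
      refine (norm_add_le _ _).trans (add_le_add ?_ ?_)
      · rw [norm_mul, mul_assoc]
        have h1 : ‖1 - x * (p : ℂ) ^ (-a)‖ ≤ 2 := by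
          refine (norm_sub_le _ _).trans ?_
          rw [norm_mul, norm_one]
          have : ‖x‖ * ‖(p : ℂ) ^ (-a)‖ ≤ 1 := by
            calc _ ≤ (p : ℝ) ^ (-(15 / 16) : ℝ) * (p : ℝ) ^ (1 / 16 : ℝ) := by gcongr
              _ = (p : ℝ) ^ (-(15 / 16) + 1 / 16 : ℝ) := by rw [← Real.rpow_add (by linarith)]
              _ ≤ 1 := Real.rpow_le_one_of_one_le_of_nonpos (by linarith) (by norm_num)
          linarith
        gcongr
        exact h p hp x hx _
      · rw [norm_mul]
        gcongr

lemma gSh_one (A : List ℂ) (s : ℂ) : gSh A s 1 = 1 := by simp [gSh]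

lemma gSh_pow {p : ℕ} (hp : p.Prime) (A : List ℂ) (hA : ∀ α ∈ A, |α.re| < 1 / 16) {s : ℂ}
    (hx : ‖(p : ℂ) ^ (-s)‖ ≤ (p : ℝ) ^ (-(15 / 16) : ℝ)) (k : ℕ) :
    gSh A s (p ^ k) = FF p A ((p : ℂ) ^ (-s)) k := by
  have hp0 : (p : ℂ) ≠ 0 := by exact_mod_cast hp.ne_zero
  rcases Nat.eq_zero_or_pos k with rfl | hk
  · rw [FF_zero hp A hA hx, pow_zero, gSh_one]
  · unfold gSh FF SS
    rw [Nat.primeFactors_prime_pow hk.ne' hp, Finset.prod_singleton]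
    congr 1
    · congr 2
      funext α
      rw [← Complex.cpow_add _ _ hp0, sub_eq_add_neg (-s) α]
    · refine tsum_congr fun j => ?_
      rw [hp.factorization_pow, Finsupp.single_eq_same, ← Complex.cpow_nat_mul]
      congr 2
      ring

lemma gSh_mul (A : List ℂ) (s : ℂ) {m n : ℕ} (h : m.Coprime n) :
    gSh A s (m * n) = gSh A s m * gSh A s n := by
  unfold gSh
  rw [h.primeFactors_mul, Finset.prod_union h.disjoint_primeFactors]
  congr 1
  · refine Finset.prod_congr rfl fun p hp => ?_
    rw [Nat.factorization_eq_of_coprime_left h (by simpa using hp)]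
  · refine Finset.prod_congr rfl fun p hp => ?_
    rw [Nat.factorization_eq_of_coprime_right h (by simpa using hp)]

lemma sum_div_mul {m n : ℕ} (h : m.Coprime n) (f : ℕ → ℂ) :
    ∑ d ∈ (m * n).divisors, f d = ∑ x ∈ m.divisors ×ˢ n.divisors, f (x.1 * x.2) := by
  rw [Nat.divisors_mul, Finset.mul_def, Finset.sum_image h.mul_injOn_divisors]

lemma GSh_mul (A : List ℂ) (s : ℂ) {m n : ℕ} (h : m.Coprime n) :
    GSh A s (m * n) = GSh A s m * GSh A s n := by
  unfold GSh
  rw [sum_div_mul h, Finset.sum_mul_sum, ← Finset.sum_product']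
  refine Finset.sum_congr rfl fun d hd => ?_
  simp only [Finset.mem_product, Nat.mem_divisors] at hd
  obtain ⟨⟨hd1, hm⟩, hd2, hn⟩ := hd
  have hd : d.1.Coprime d.2 := (h.coprime_dvd_left hd1).coprime_dvd_right hd2
  have e1 : ∑ e ∈ (d.1 * d.2).divisors, (ArithmeticFunction.moebius e : ℂ) / (e : ℂ) ^ s *
        gSh A s (m * n * e / (d.1 * d.2)) =
      (∑ e ∈ d.1.divisors, (ArithmeticFunction.moebius e : ℂ) / (e : ℂ) ^ s *
        gSh A s (m * e / d.1)) *
      (∑ e ∈ d.2.divisors, (ArithmeticFunction.moebius e : ℂ) / (e : ℂ) ^ s *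
        gSh A s (n * e / d.2)) := by
    rw [sum_div_mul hd, Finset.sum_mul_sum, ← Finset.sum_product']
    refine Finset.sum_congr rfl fun e he => ?_
    simp only [Finset.mem_product, Nat.mem_divisors] at he
    obtain ⟨⟨he1, _⟩, he2, _⟩ := he
    have he : e.1.Coprime e.2 := (hd.coprime_dvd_left he1).coprime_dvd_right he2
    have hh : (m * e.1 / d.1).Coprime (n * e.2 / d.2) := by
      have h1 : m * e.1 / d.1 ∣ m * m := by
        rw [Nat.mul_div_right_comm hd1]
        exact mul_dvd_mul (Nat.div_dvd_of_dvd hd1) (he1.trans hd1)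
      have h2 : n * e.2 / d.2 ∣ n * n := by
        rw [Nat.mul_div_right_comm hd2]
        exact mul_dvd_mul (Nat.div_dvd_of_dvd hd2) (he2.trans hd2)
      exact ((Nat.Coprime.mul_left (h.mul_right h) (h.mul_right h)).coprime_dvd_left
        h1).coprime_dvd_right h2
    have e3 : m * n * (e.1 * e.2) / (d.1 * d.2) = (m * e.1 / d.1) * (n * e.2 / d.2) := by
      rw [Nat.div_mul_div_comm (hd1.mul_right _) (hd2.mul_right _)]
      congr 1; ring
    rw [e3, gSh_mul A s hh, ArithmeticFunction.isMultiplicative_moebius.map_mul_of_coprime he,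
      Nat.cast_mul, Complex.natCast_mul_natCast_cpow, Int.cast_mul]
    ring
  rw [e1, ArithmeticFunction.isMultiplicative_moebius.map_mul_of_coprime hd, Nat.totient_mul hd]
  simp only [Nat.cast_mul, Int.cast_mul]
  rw [Complex.natCast_mul_natCast_cpow]
  ring

lemma sum_div_pow {R : Type*} [AddCommMonoid R] {p : ℕ} (hp : p.Prime) (k : ℕ) (f : ℕ → R)
    (hf : ∀ i, f (p ^ (i + 2)) = 0) : ∑ d ∈ (p ^ (k + 1)).divisors, f d = f 1 + f p := by
  rw [Nat.sum_divisors_prime_pow hp, Finset.sum_range_succ', Finset.sum_range_succ',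
    Finset.sum_eq_zero fun i _ => hf i]
  simp [add_comm]

lemma moebius_sq {p : ℕ} (hp : p.Prime) (i : ℕ) : ArithmeticFunction.moebius (p ^ (i + 2)) = 0 := by
  rw [ArithmeticFunction.moebius_apply_prime_pow hp (by omega)]; simp

lemma GSh_one (A : List ℂ) (s : ℂ) : GSh A s 1 = 1 := by simp [GSh, gSh_one]

lemma GSh_pow {p : ℕ} (hp : p.Prime) (A : List ℂ) (s : ℂ) (k : ℕ) :
    GSh A s (p ^ (k + 1)) = gSh A s (p ^ (k + 1)) - (p : ℂ) ^ s / ((p : ℂ) - 1) *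
      (gSh A s (p ^ k) - (p : ℂ) ^ (-s) * gSh A s (p ^ (k + 1))) := by
  unfold GSh
  have hp0 : (p : ℂ) ≠ 0 := by exact_mod_cast hp.ne_zero
  have e := sum_div_pow (R := ℂ) hp 0
  rw [zero_add, pow_one] at e
  rw [sum_div_pow hp k _ fun i => by simp [moebius_sq hp], e _ fun i => by simp [moebius_sq hp]]
  have h1 : p ^ (k + 1) * p / p = p ^ (k + 1) := Nat.mul_div_cancel _ hp.pos
  have h2 : p ^ (k + 1) / p = p ^ k := by rw [pow_succ]; exact Nat.mul_div_cancel _ hp.pos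
  simp only [Nat.divisors_one, Finset.sum_singleton, ArithmeticFunction.moebius_apply_prime hp,
    Nat.totient_prime hp, h1, mul_one, h2, ArithmeticFunction.moebius_apply_one, Nat.totient_one,
    Nat.cast_one, Complex.one_cpow, Nat.div_one, Int.cast_one, Int.cast_neg,
    Nat.cast_sub hp.one_le, Complex.cpow_neg]
  ring

lemma GSh_eq {p : ℕ} (hp : p.Prime) (L M : List ℂ) (a : ℂ)
    (hA : ∀ α ∈ L ++ a :: M, |α.re| < 1 / 16) (k : ℕ) :
    ‖(p : ℂ) ^ (-(1 - a))‖ ≤ (p : ℝ) ^ (-(15 / 16) : ℝ) ∧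
    GSh (L ++ a :: M) (1 - a) (p ^ k) = FF p (L ++ M) ((p : ℂ) ^ (-(1 - a))) k := by
  have hp0 : (p : ℂ) ≠ 0 := by exact_mod_cast hp.ne_zero
  have hp1 : (p : ℂ) - 1 ≠ 0 := by
    rw [sub_ne_zero]; exact_mod_cast hp.ne_one
  have h2 := two_le_prime hp
  have hx : ‖(p : ℂ) ^ (-(1 - a))‖ ≤ (p : ℝ) ^ (-(15 / 16) : ℝ) := by
    rw [Complex.norm_natCast_cpow_of_pos hp.pos]
    apply Real.rpow_le_rpow_of_exponent_le (by linarith)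
    have := abs_lt.1 (hA a (by simp))
    simp; linarith
  have hA' : ∀ α ∈ L ++ M, |α.re| < 1 / 16 := fun α hα => hA α (by
    simp only [List.mem_append, List.mem_cons] at *; tauto)
  refine ⟨hx, ?_⟩
  cases k with
  | zero => rw [pow_zero, GSh_one, FF_zero hp _ hA' hx]
  | succ k =>
    rw [GSh_pow hp, gSh_pow hp _ hA hx, gSh_pow hp _ hA hx]
    have e := SS_mid hp a L M hA hx k
    have h3 : (p : ℂ) ^ (-(1 - a)) * (p : ℂ) ^ (-a) = (p : ℂ)⁻¹ := by
      rw [← Complex.cpow_add _ _ hp0, ← Complex.cpow_neg_one]; congr 1; ring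
    have h4 : (p : ℂ) ^ (1 - a) = p * (p : ℂ) ^ (-a) := by
      rw [sub_eq_add_neg, Complex.cpow_add _ _ hp0, Complex.cpow_one]
    unfold FF
    have h5 : ((L ++ a :: M).map fun α => 1 - (p : ℂ) ^ (-(1 - a)) * (p : ℂ) ^ (-α)).prod =
        (1 - (p : ℂ)⁻¹) *
          ((L ++ M).map fun α => 1 - (p : ℂ) ^ (-(1 - a)) * (p : ℂ) ^ (-α)).prod := by
      simp only [List.map_append, List.map_cons, List.prod_append, List.prod_cons, h3]
      ring
    rw [h5, h4]
    generalize ((L ++ M).map fun α => 1 - (p : ℂ) ^ (-(1 - a)) * (p : ℂ) ^ (-α)).prod = Q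
    have h6 : (p : ℂ) ^ (-a) * (p : ℂ) ^ (-(1 - a)) = (p : ℂ)⁻¹ := by rw [mul_comm, h3]
    generalize (p : ℂ) ^ (-(1 - a)) = x at *
    generalize (p : ℂ) ^ (-a) = u at *
    rw [show ∀ X Y : ℂ, (p : ℂ) * u / (p - 1) * (X - x * Y) =
      p / (p - 1) * (u * X - (u * x) * Y) from fun X Y => by ring, h6]
    have h7 : SS p (L ++ M) x (k + 1) = SS p (L ++ a :: M) x (k + 1) - u * SS p (L ++ a :: M) x k := by
      rw [e]; ring
    rw [h7]
    field_simp
    ring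

lemma GSh_bound (L M : List ℂ) (a : ℂ)
    (hA : ∀ α ∈ L ++ a :: M, |α.re| < 1 / 16) :
    ∃ C : ℝ, 0 ≤ C ∧ ∀ p : ℕ, p.Prime → ∀ m : ℕ,
      ‖GSh (L ++ a :: M) (1 - a) (p ^ m)‖ ≤ C * ((p : ℝ) ^ (3 / 32 : ℝ)) ^ m := by
  obtain ⟨C, hC, h⟩ := FF_bound (L ++ M) (fun α hα => hA α (by
    simp only [List.mem_append, List.mem_cons] at *; tauto))
  refine ⟨C, hC, fun p hp m => ?_⟩
  obtain ⟨hx, e⟩ := GSh_eq hp L M a hA m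
  rw [e]
  exact h p hp _ hx m

lemma t_le_half {p : ℕ} (hp : p.Prime) : (p : ℝ) ^ (-(17 / 16) : ℝ) ≤ 1 / 2 := by
  have h2 := two_le_prime hp
  calc (p : ℝ) ^ (-(17 / 16) : ℝ) ≤ (2 : ℝ) ^ (-(17 / 16) : ℝ) :=
        Real.rpow_le_rpow_of_nonpos (by norm_num) h2 (by norm_num)
    _ ≤ (2 : ℝ) ^ (-1 : ℝ) := Real.rpow_le_rpow_of_exponent_le (by norm_num) (by norm_num)
    _ = 1 / 2 := by rw [Real.rpow_neg_one]; norm_num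

lemma local_bound {E : Type*} [NormedField E] [CompleteSpace E] (y : ℕ → E) (C t : ℝ)
    (ht0 : 0 ≤ t) (ht : t ≤ 1 / 2) (hC : 0 ≤ C) (h0 : y 0 = 1)
    (hy : ∀ k, ‖y (k + 1)‖ ≤ C * t ^ (k + 1)) :
    Summable (fun k => ‖y k‖) ∧ ‖(∑' k, y k) - 1‖ ≤ 2 * C * t := by
  have hg : HasSum (fun k : ℕ => C * t ^ (k + 1)) (C * t * (1 - t)⁻¹) := by
    have := (hasSum_geometric_of_lt_one ht0 (by linarith)).mul_left (C * t)
    refine this.congr_fun ?_ |> fun h => h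
    intro k; ring
  have h1 : Summable (fun k => ‖y (k + 1)‖) :=
    Summable.of_nonneg_of_le (fun _ => norm_nonneg _) hy hg.summable
  have h2 : Summable (fun k => ‖y k‖) := (summable_nat_add_iff 1).1 h1
  refine ⟨h2, ?_⟩
  rw [h2.of_norm.tsum_eq_zero_add, h0, add_sub_cancel_left]
  refine (tsum_of_norm_bounded hg hy).trans ?_
  have : (1 - t)⁻¹ ≤ 2 := by
    rw [inv_le_comm₀ (by linarith) (by norm_num)]; linarith
  have := mul_le_mul_of_nonneg_left this (mul_nonneg hC ht0)
  linarith

lemma summable_mult (f : ℕ → ℝ) (hf : ∀ n, 0 ≤ f n) (f0 : f 0 = 0) (f1 : f 1 = 1)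
    (fm : ∀ {m n : ℕ}, m.Coprime n → f (m * n) = f m * f n) (C : ℝ) (hC : 0 ≤ C)
    (hb : ∀ p : ℕ, p.Prime → ∀ k, f (p ^ (k + 1)) ≤ C * ((p : ℝ) ^ (-(17 / 16) : ℝ)) ^ (k + 1)) :
    Summable f := by
  have hloc (p : ℕ) (hp : p.Prime) := local_bound (fun k => f (p ^ k)) C
    ((p : ℝ) ^ (-(17 / 16) : ℝ)) (by positivity) (t_le_half hp) hC (by simp [f1])
    (fun k => by rw [Real.norm_of_nonneg (hf _)]; exact hb p hp k)
  have hS : Summable fun n : ℕ => 2 * C * (n : ℝ) ^ (-(17 / 16) : ℝ) :=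
    (Real.summable_nat_rpow.2 (by norm_num)).mul_left _
  refine summable_of_sum_le (c := Real.exp (∑' n : ℕ, 2 * C * (n : ℝ) ^ (-(17 / 16) : ℝ))) hf
    fun u => ?_
  obtain ⟨N, hN⟩ := u.exists_nat_subset_range
  have hs := (EulerProduct.summable_and_hasSum_smoothNumbers_prod_primesBelow_tsum f1 fm
    (fun {p} hp => (hloc p hp).1) N).2
  have hs' := (hasSum_subtype_iff_indicator (f := f) (s := N.smoothNumbers)).1 hs
  have e : ∑ n ∈ u, f n = ∑ n ∈ u, N.smoothNumbers.indicator f n := by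
    refine Finset.sum_congr rfl fun n hn => ?_
    rcases Nat.eq_zero_or_pos n with rfl | h
    · rw [Set.indicator_apply, f0]; simp
    · rw [Set.indicator_of_mem]
      exact Nat.mem_smoothNumbers_of_lt h (Finset.mem_range.1 (hN hn))
  rw [e]
  refine (sum_le_hasSum u (fun n _ => Set.indicator_nonneg (fun n _ => hf n) n) hs').trans ?_
  have h1 : ∏ p ∈ N.primesBelow, ∑' n, f (p ^ n) ≤
      ∏ p ∈ N.primesBelow, (1 + 2 * C * (p : ℝ) ^ (-(17 / 16) : ℝ)) := by
    refine Finset.prod_le_prod (fun p _ => tsum_nonneg fun _ => hf _) fun p hp => ?_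
    have := (hloc p (Nat.prime_of_mem_primesBelow hp)).2
    rw [Real.norm_eq_abs] at this
    have := (abs_le.1 this).2
    linarith
  refine h1.trans ((Real.prod_one_add_le_exp_sum _ fun _ => by positivity).trans ?_)
  exact Real.exp_le_exp.2 (hS.sum_le_tsum _ fun _ _ => by positivity)

lemma conv_pow {R : Type*} [CommSemiring R] (a b : ArithmeticFunction R) {p : ℕ} (hp : p.Prime)
    (k : ℕ) (b1 : b 1 = 1) (b2 : ∀ i, b (p ^ (i + 2)) = 0) :
    (a * b) (p ^ (k + 1)) = a (p ^ (k + 1)) + a (p ^ k) * b p := by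
  rw [ArithmeticFunction.mul_apply, Nat.sum_divisorsAntidiagonal' (fun x y => a x * b y),
    sum_div_pow hp _ _ fun i => by rw [b2, mul_zero]]
  have h2 : p ^ (k + 1) / p = p ^ k := by rw [pow_succ]; exact Nat.mul_div_cancel _ hp.pos
  rw [h2, b1, Nat.div_one, mul_one]

noncomputable def normAF (a : ArithmeticFunction ℂ) : ArithmeticFunction ℝ :=
  ⟨fun n => ‖a n‖, by simp⟩

lemma normAF_apply (a : ArithmeticFunction ℂ) (n : ℕ) : normAF a n = ‖a n‖ := rfl

lemma normAF_mult {a : ArithmeticFunction ℂ} (h : a.IsMultiplicative) :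
    (normAF a).IsMultiplicative := by
  refine ⟨by simp [normAF_apply, h.map_one], fun {m n} hmn => ?_⟩
  simp [normAF_apply, h.map_mul_of_coprime hmn]

/-- power function -/
noncomputable def powAF (z : ℂ) (hz : z ≠ 0) : ArithmeticFunction ℂ :=
  ⟨fun n => (n : ℂ) ^ z, by simp [hz]⟩

lemma powAF_apply (z : ℂ) (hz : z ≠ 0) (n : ℕ) : powAF z hz n = (n : ℂ) ^ z := rfl

lemma powAF_mult (z : ℂ) (hz : z ≠ 0) : (powAF z hz).IsMultiplicative := by
  refine ⟨by simp [powAF_apply], fun {m n} _ => ?_⟩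
  simp [powAF_apply, Complex.natCast_mul_natCast_cpow]

noncomputable def mpowAF (z : ℂ) : ArithmeticFunction ℂ :=
  ⟨fun n => (ArithmeticFunction.moebius n : ℂ) * (n : ℂ) ^ z, by simp⟩

lemma mpowAF_apply (z : ℂ) (n : ℕ) :
    mpowAF z n = (ArithmeticFunction.moebius n : ℂ) * (n : ℂ) ^ z := rfl

lemma mpowAF_mult (z : ℂ) : (mpowAF z).IsMultiplicative := by
  refine ⟨by simp [mpowAF_apply], fun {m n} h => ?_⟩
  rw [mpowAF_apply, ArithmeticFunction.isMultiplicative_moebius.map_mul_of_coprime h, Nat.cast_mul,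
    Complex.natCast_mul_natCast_cpow, Int.cast_mul, mpowAF_apply, mpowAF_apply]
  ring

lemma normAF_nonneg (a : ArithmeticFunction ℂ) (n : ℕ) : 0 ≤ normAF a n := norm_nonneg (a n)

lemma abs_main (K : ℕ → ℂ) (K1 : K 1 = 1)
    (Km : ∀ {m n : ℕ}, m.Coprime n → K (m * n) = K m * K n) (C : ℝ) (hC : 0 ≤ C)
    (hK : ∀ p : ℕ, p.Prime → ∀ m, ‖K (p ^ m)‖ ≤ C * ((p : ℝ) ^ (3 / 16 : ℝ)) ^ m)
    (w s : ℂ) (hw : w.re < 1 / 8) (hs : 1 / 4 < s.re) (W : ℕ → ℂ)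
    (hW : ∀ p : ℕ, p.Prime → W p = ∑' d : ℕ, (K (p ^ d) * ((p : ℂ) ^ (-1 - s)) ^ d
      - K (p ^ (d + 1)) * ((p : ℂ) ^ (-1 - s)) ^ d * (p : ℂ) ^ (w - 2)))
    (T : ℕ × ℕ → ℂ) (hT : ∀ x, T x = K (x.2 * x.1) * ((x.1 : ℂ) ^ (-1 - s) *
      ((ArithmeticFunction.moebius x.2 : ℂ) * (x.2 : ℂ) ^ (w - 2)))) :
    Summable (fun x => ‖T x‖) ∧
    (∀ p : ℕ, p.Prime → ‖W p - 1‖ ≤ 2 * (2 * C) * (p : ℝ) ^ (-(17 / 16) : ℝ)) ∧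
    HasProd (fun p : Nat.Primes => W p) (∑' x, T x) := by
  have hz : (-1 - s : ℂ) ≠ 0 := by
    intro h
    have := congrArg Complex.re h
    simp at this; linarith
  set a := powAF (-1 - s) hz with ha
  set b := mpowAF (w - 2) with hb
  have ha_m : a.IsMultiplicative := powAF_mult _ _
  have hb_m : b.IsMultiplicative := mpowAF_mult _
  have hb2 {p : ℕ} (hp : p.Prime) (i : ℕ) : b (p ^ (i + 2)) = 0 := by
    simp [hb, mpowAF_apply, moebius_sq hp]
  have hT' (x : ℕ × ℕ) : T x = K (x.2 * x.1) * (a x.1 * b x.2) := hT x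
  let f : ℕ → ℂ := fun n => K n * (a * b) n
  let f' : ℕ → ℝ := fun n => ‖K n‖ * (normAF a * normAF b) n
  have hab_m := ha_m.mul hb_m
  have hab'_m := (normAF_mult ha_m).mul (normAF_mult hb_m)
  have hapow (p k : ℕ) : a (p ^ k) = ((p : ℂ) ^ (-1 - s)) ^ k := by
    rw [ha, powAF_apply, natpow_cpow]
  have hbp {p : ℕ} (hp : p.Prime) : b p = -(p : ℂ) ^ (w - 2) := by
    rw [hb, mpowAF_apply, ArithmeticFunction.moebius_apply_prime hp]; simp
  have hnn (n : ℕ) : 0 ≤ (normAF a * normAF b) n := by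
    rw [ArithmeticFunction.mul_apply]
    exact Finset.sum_nonneg fun x _ => mul_nonneg (normAF_nonneg _ _) (normAF_nonneg _ _)
  have hf'nn (n : ℕ) : 0 ≤ f' n := mul_nonneg (norm_nonneg _) (hnn n)
  have hff' (n : ℕ) : ‖f n‖ ≤ f' n := by
    simp only [f, f', norm_mul, ArithmeticFunction.mul_apply]
    refine mul_le_mul_of_nonneg_left ((norm_sum_le _ _).trans (le_of_eq ?_)) (norm_nonneg _)
    exact Finset.sum_congr rfl fun x _ => norm_mul _ _
  -- bounds on the basic powers
  have hA0 {p : ℕ} (hp : p.Prime) : ‖(p : ℂ) ^ (-1 - s)‖ ≤ (p : ℝ) ^ (-(5 / 4) : ℝ) := by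
    have h2 := two_le_prime hp
    rw [Complex.norm_natCast_cpow_of_pos hp.pos]
    apply Real.rpow_le_rpow_of_exponent_le (by linarith)
    simp; linarith
  have hB0 {p : ℕ} (hp : p.Prime) : ‖(p : ℂ) ^ (w - 2)‖ ≤ (p : ℝ) ^ (-(5 / 4) : ℝ) := by
    have h2 := two_le_prime hp
    rw [Complex.norm_natCast_cpow_of_pos hp.pos]
    apply Real.rpow_le_rpow_of_exponent_le (by linarith)
    simp; linarith
  have ht {p : ℕ} (hp : p.Prime) : (p : ℝ) ^ (-(17 / 16) : ℝ) =
      (p : ℝ) ^ (3 / 16 : ℝ) * (p : ℝ) ^ (-(5 / 4) : ℝ) := by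
    have h2 := two_le_prime hp
    rw [← Real.rpow_add (by linarith)]; norm_num
  have hfb (p : ℕ) (hp : p.Prime) (k : ℕ) :
      f' (p ^ (k + 1)) ≤ 2 * C * ((p : ℝ) ^ (-(17 / 16) : ℝ)) ^ (k + 1) := by
    have e : (normAF a * normAF b) (p ^ (k + 1)) =
        ‖(p : ℂ) ^ (-1 - s)‖ ^ (k + 1) + ‖(p : ℂ) ^ (-1 - s)‖ ^ k * ‖(p : ℂ) ^ (w - 2)‖ := by
      rw [conv_pow _ _ hp k (by rw [normAF_apply, hb_m.map_one, norm_one])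
        fun i => by rw [normAF_apply, hb2 hp, norm_zero]]
      simp only [normAF_apply, hapow, hbp hp, norm_pow, norm_neg]
    have h1 : (normAF a * normAF b) (p ^ (k + 1)) ≤ 2 * ((p : ℝ) ^ (-(5 / 4) : ℝ)) ^ (k + 1) := by
      rw [e, two_mul]
      refine add_le_add (pow_le_pow_left₀ (norm_nonneg _) (hA0 hp) _) ?_
      rw [pow_succ]
      gcongr
      · exact hA0 hp
      · exact hB0 hp
    calc f' (p ^ (k + 1)) ≤ (C * ((p : ℝ) ^ (3 / 16 : ℝ)) ^ (k + 1)) *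
          (2 * ((p : ℝ) ^ (-(5 / 4) : ℝ)) ^ (k + 1)) :=
          mul_le_mul (hK p hp _) h1 (hnn _) (by positivity)
      _ = _ := by rw [ht hp, mul_pow]; ring
  have hf'S : Summable f' := by
    refine summable_mult f' hf'nn (by simp [f']) ?_ ?_ (2 * C) (by positivity) hfb
    · simp only [f', K1, hab'_m.map_one]; simp
    · intro m n h
      simp only [f', Km h, hab'_m.map_mul_of_coprime h, norm_mul]; ring
  have hT0 (x : ℕ × ℕ) (h : x.2 * x.1 = 0) : T x = 0 := by
    rw [hT']
    rcases mul_eq_zero.1 h with h | h <;> simp [h]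
  have hTS : Summable (fun x => ‖T x‖) := by
    refine summable_of_sum_le (c := ∑' n, f' n) (fun _ => norm_nonneg _) fun u => ?_
    rw [← Finset.sum_fiberwise_of_maps_to (t := u.image fun x => x.2 * x.1)
      (g := fun x => x.2 * x.1) (fun x hx => Finset.mem_image_of_mem _ hx)]
    refine (Finset.sum_le_sum fun n _ => ?_).trans (hf'S.sum_le_tsum _ fun n _ => hf'nn n)
    rcases Nat.eq_zero_or_pos n with rfl | hn
    · rw [Finset.sum_eq_zero]
      · exact hf'nn 0
      · intro x hx
        rw [hT0 x (Finset.mem_filter.1 hx).2, norm_zero]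
    · simp only [f', ArithmeticFunction.mul_apply, Finset.mul_sum]
      have hsub : (u.filter fun x => x.2 * x.1 = n) ⊆ n.divisorsAntidiagonal := by
        intro x hx
        have := (Finset.mem_filter.1 hx).2
        rw [Nat.mem_divisorsAntidiagonal]
        exact ⟨by rw [mul_comm]; exact this, hn.ne'⟩
      refine le_trans (le_of_eq ?_) (Finset.sum_le_sum_of_subset_of_nonneg hsub
        fun x _ _ => mul_nonneg (norm_nonneg _) (mul_nonneg (normAF_nonneg _ _) (normAF_nonneg _ _)))
      refine Finset.sum_congr rfl fun x hx => ?_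
      rw [hT', (Finset.mem_filter.1 hx).2, norm_mul, norm_mul, normAF_apply, normAF_apply]
  have hfS : Summable (fun n => ‖f n‖) :=
    Summable.of_nonneg_of_le (fun _ => norm_nonneg _) hff' hf'S
  have hfib : ∑' x, T x = ∑' n, f n := by
    have h1 := (hTS.of_norm.hasSum.tsum_fiberwise (fun x : ℕ × ℕ => x.2 * x.1)).tsum_eq
    rw [← h1]
    refine tsum_congr fun n => ?_
    rcases Nat.eq_zero_or_pos n with rfl | hn
    · have : ∀ x : (fun x : ℕ × ℕ => x.2 * x.1) ⁻¹' {0}, T x = 0 := fun x => hT0 x x.2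
      simp only [this, tsum_zero]
      simp [f]
    · have hset : (fun x : ℕ × ℕ => x.2 * x.1) ⁻¹' {n} = ↑(n.divisorsAntidiagonal) := by
        ext x
        simp [Nat.mem_divisorsAntidiagonal, hn.ne', mul_comm]
      rw [hset, Finset.tsum_subtype']
      simp only [f, ArithmeticFunction.mul_apply, Finset.mul_sum]
      refine Finset.sum_congr rfl fun x hx => ?_
      rw [hT', mul_comm x.2, (Nat.mem_divisorsAntidiagonal.1 hx).1]
  have f1 : f 1 = 1 := by simp only [f, K1, hab_m.map_one, mul_one]
  have fm {m n : ℕ} (h : m.Coprime n) : f (m * n) = f m * f n := by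
    simp only [f, Km h, hab_m.map_mul_of_coprime h]; ring
  have hE := EulerProduct.eulerProduct_hasProd f1 fm hfS (by simp [f])
  have hloc (p : ℕ) (hp : p.Prime) := local_bound (fun k => f (p ^ k)) (2 * C)
    ((p : ℝ) ^ (-(17 / 16) : ℝ)) (by positivity) (t_le_half hp) (by positivity) (by simp [f1])
    (fun k => (hff' _).trans (hfb p hp k))
  have hWf (p : ℕ) (hp : p.Prime) : W p = ∑' k, f (p ^ k) := by
    have hS1 : Summable fun d : ℕ => K (p ^ d) * ((p : ℂ) ^ (-1 - s)) ^ d := by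
      have h3 := t_le_half hp
      refine Summable.of_norm_bounded (g := fun d : ℕ => C * ((p : ℝ) ^ (-(17 / 16) : ℝ)) ^ d)
        ((summable_geometric_of_lt_one (by positivity) (by linarith)).mul_left _) fun d => ?_
      rw [norm_mul, norm_pow, ht hp, mul_pow, ← mul_assoc]
      gcongr
      · exact hK p hp d
      · exact hA0 hp
    have hf2 (k : ℕ) : f (p ^ (k + 1)) = K (p ^ (k + 1)) * ((p : ℂ) ^ (-1 - s)) ^ (k + 1)
        - K (p ^ (k + 1)) * ((p : ℂ) ^ (-1 - s)) ^ k * (p : ℂ) ^ (w - 2) := by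
      simp only [f, conv_pow a b hp k hb_m.map_one (hb2 hp), hapow, hbp hp]
      ring
    have hS0 := (summable_nat_add_iff 1).2 hS1
    have hSf := (summable_nat_add_iff 1).2 (hloc p hp).1.of_norm
    have hS2 : Summable fun d : ℕ =>
        K (p ^ (d + 1)) * ((p : ℂ) ^ (-1 - s)) ^ d * (p : ℂ) ^ (w - 2) := by
      refine (hS0.sub hSf).congr fun d => ?_
      rw [hf2]; ring
    rw [hW p hp, hS1.tsum_sub hS2, hS1.tsum_eq_zero_add, (hloc p hp).1.of_norm.tsum_eq_zero_add]
    simp only [hf2]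
    rw [hS0.tsum_sub hS2]
    simp only [pow_zero, K1, f1]
    ring
  refine ⟨hTS, fun p hp => ?_, ?_⟩
  · rw [hWf p hp]; exact (hloc p hp).2
  · rw [hfib]
    convert hE using 2 with p
    exact hWf p p.2

lemma summable_mul_sub_one {ι : Type*} {x y : ι → ℂ} (hx : Summable fun i => ‖x i - 1‖)
    (hy : Summable fun i => ‖y i - 1‖) : Summable fun i => ‖x i * y i - 1‖ := by
  refine Summable.of_nonneg_of_le (fun _ => norm_nonneg _) (fun i => ?_)
    (((hx.mul_right (∑' i, ‖y i - 1‖)).add hx).add hy)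
  rw [show x i * y i - 1 = (x i - 1) * (y i - 1) + (x i - 1) + (y i - 1) by ring]
  refine (norm_add₃_le).trans ?_
  rw [norm_mul]
  gcongr
  exact hy.le_tsum i fun _ _ => norm_nonneg _

lemma summable_list {ι α : Type*} (l : List α) (f : α → ι → ℂ)
    (h : ∀ a ∈ l, Summable fun i => ‖f a i - 1‖) :
    Summable fun i => ‖(l.map fun a => f a i).prod - 1‖ := by
  induction l with
  | nil => simp [summable_zero]
  | cons a l ih =>
    simp only [List.map_cons, List.prod_cons]
    exact summable_mul_sub_one (h a (by simp)) (ih fun b hb => h b (by simp [hb]))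

lemma hasProd_list {ι α : Type*} (l : List α) (f : α → ι → ℂ) (z : α → ℂ)
    (h : ∀ a ∈ l, HasProd (f a) (z a)⁻¹) :
    HasProd (fun i => (l.map fun a => f a i).prod) ((l.map z).prod)⁻¹ := by
  induction l with
  | nil => simp [hasProd_one]
  | cons a l ih =>
    simp only [List.map_cons, List.prod_cons, mul_inv]
    exact (h a (by simp)).mul (ih fun b hb => h b (by simp [hb]))

lemma hasProd_zeta {z : ℂ} (hz : 1 < z.re) :
    HasProd (fun p : Nat.Primes => 1 - ((p : ℕ) : ℂ) ^ (-z)) (riemannZeta z)⁻¹ := by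
  have h := riemannZeta_eulerProduct_hasProd hz
  have h2 := Filter.Tendsto.inv₀ h (riemannZeta_ne_zero_of_one_le_re hz.le)
  unfold HasProd
  refine h2.congr fun s => ?_
  rw [← Finset.prod_inv_distrib]
  simp

/-- Let A, B be tuples all of whose entries have |ℜ| < 1/16, with
distinguished entries α̂ ∈ A, β̂ ∈ B, A′ = A minus α̂, B′ = B minus β̂. Then for every s
with ℜs > 1/4 the double series
Σ_{d≥1} Σ_{q≥1} μ(q) G_A(1−α̂,qd) G_B(1−β̂,qd) d^{−1−s} q^{−2+α̂+β̂}
converges absolutely and equals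
∏_{a∈A′,b∈B′} ζ(1+s+a+b) ×
∏_p [ ∏_{a∈A′,b∈B′}(1−p^{−1−a−b−s}) Σ_{d≥0} Σ_{q=0}^{1} (−1)^q G_A(1−α̂,p^{d+q})
      G_B(1−β̂,p^{d+q}) p^{−d−ds−q(2−α̂−β̂)} ],
the product over primes converging absolutely.  (The sum over all of ℕ × ℕ below agrees
with the sum over d,q ≥ 1 since the terms with d = 0 or q = 0 vanish.) -/
theorem stmt16 (L₁ L₂ M₁ M₂ : List ℂ) (αh βh : ℂ)
    (hA : ∀ α ∈ L₁ ++ αh :: L₂, |α.re| < 1/16)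
    (hB : ∀ β ∈ M₁ ++ βh :: M₂, |β.re| < 1/16)
    (s : ℂ) (hs : 1/4 < s.re) :
    Summable (fun x : ℕ × ℕ =>
      ‖(ArithmeticFunction.moebius x.2 : ℂ)
          * GSh (L₁ ++ αh :: L₂) (1 - αh) (x.2 * x.1)
          * GSh (M₁ ++ βh :: M₂) (1 - βh) (x.2 * x.1)
          * (x.1 : ℂ) ^ (-1 - s) * (x.2 : ℂ) ^ (αh + βh - 2)‖) ∧
    Summable (fun p : Nat.Primes =>
      ‖((L₁ ++ L₂).map (fun a =>
            ((M₁ ++ M₂).map (fun b => 1 - ((p : ℕ) : ℂ) ^ (-1 - a - b - s))).prod)).prod *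
          (∑' d : ℕ, ∑ q ∈ Finset.range 2,
            (-1 : ℂ) ^ q * GSh (L₁ ++ αh :: L₂) (1 - αh) ((p : ℕ) ^ (d + q))
              * GSh (M₁ ++ βh :: M₂) (1 - βh) ((p : ℕ) ^ (d + q))
              * ((p : ℕ) : ℂ) ^ (-(d : ℂ) - (d : ℂ) * s - (q : ℂ) * (2 - αh - βh))) - 1‖) ∧
    ∑' x : ℕ × ℕ,
        (ArithmeticFunction.moebius x.2 : ℂ)
          * GSh (L₁ ++ αh :: L₂) (1 - αh) (x.2 * x.1)
          * GSh (M₁ ++ βh :: M₂) (1 - βh) (x.2 * x.1)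
          * (x.1 : ℂ) ^ (-1 - s) * (x.2 : ℂ) ^ (αh + βh - 2)
      = ((L₁ ++ L₂).map (fun a =>
            ((M₁ ++ M₂).map (fun b => riemannZeta (1 + s + a + b))).prod)).prod *
        ∏' p : Nat.Primes,
          (((L₁ ++ L₂).map (fun a =>
              ((M₁ ++ M₂).map (fun b => 1 - ((p : ℕ) : ℂ) ^ (-1 - a - b - s))).prod)).prod *
            ∑' d : ℕ, ∑ q ∈ Finset.range 2,
              (-1 : ℂ) ^ q * GSh (L₁ ++ αh :: L₂) (1 - αh) ((p : ℕ) ^ (d + q))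
                * GSh (M₁ ++ βh :: M₂) (1 - βh) ((p : ℕ) ^ (d + q))
                * ((p : ℕ) : ℂ) ^ (-(d : ℂ) - (d : ℂ) * s - (q : ℂ) * (2 - αh - βh))) := by
  have hA1 : ∀ a ∈ L₁ ++ L₂, |a.re| < 1 / 16 := fun α hα => hA α (by
    simp only [List.mem_append, List.mem_cons] at *; tauto)
  have hB1 : ∀ b ∈ M₁ ++ M₂, |b.re| < 1 / 16 := fun α hα => hB α (by
    simp only [List.mem_append, List.mem_cons] at *; tauto)
  obtain ⟨C₁, hC₁, hb₁⟩ := GSh_bound L₁ L₂ αh hA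
  obtain ⟨C₂, hC₂, hb₂⟩ := GSh_bound M₁ M₂ βh hB
  have hre {a b : ℂ} (ha : a ∈ L₁ ++ L₂) (hb : b ∈ M₁ ++ M₂) : 9 / 8 < (1 + s + a + b).re := by
    have h1 := abs_lt.1 (hA1 a ha)
    have h2 := abs_lt.1 (hB1 b hb)
    simp; linarith
  have hw : (αh + βh).re < 1 / 8 := by
    have h1 := abs_lt.1 (hA αh (by simp))
    have h2 := abs_lt.1 (hB βh (by simp))
    simp; linarith
  have hsumrpow : Summable fun p : Nat.Primes => ((p : ℕ) : ℝ) ^ (-(17 / 16) : ℝ) :=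
    Nat.Primes.summable_rpow.2 (by norm_num)
  obtain ⟨h1, h2, h3⟩ := abs_main
    (fun n => GSh (L₁ ++ αh :: L₂) (1 - αh) n * GSh (M₁ ++ βh :: M₂) (1 - βh) n)
    (by simp [GSh_one]) (fun {m n} h => by simp only [GSh_mul _ _ h]; ring)
    (C₁ * C₂) (by positivity)
    (fun p hp m => by
      have h2 := two_le_prime hp
      rw [norm_mul]
      refine (mul_le_mul (hb₁ p hp m) (hb₂ p hp m) (norm_nonneg _) (by positivity)).trans
        (le_of_eq ?_)
      rw [show (3 / 16 : ℝ) = 3 / 32 + 3 / 32 by norm_num, Real.rpow_add (by linarith), mul_pow]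
      ring)
    (αh + βh) s hw hs
    (fun p => ∑' d : ℕ, ∑ q ∈ Finset.range 2,
            (-1 : ℂ) ^ q * GSh (L₁ ++ αh :: L₂) (1 - αh) ((p : ℕ) ^ (d + q))
              * GSh (M₁ ++ βh :: M₂) (1 - βh) ((p : ℕ) ^ (d + q))
              * ((p : ℕ) : ℂ) ^ (-(d : ℂ) - (d : ℂ) * s - (q : ℂ) * (2 - αh - βh)))
    (fun p hp => by
      have hp0 : (p : ℂ) ≠ 0 := by exact_mod_cast hp.ne_zero
      refine tsum_congr fun d => ?_
      rw [Finset.sum_range_succ, Finset.sum_range_one, ← Complex.cpow_nat_mul]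
      have e0 : -(d : ℂ) - (d : ℂ) * s - ((0 : ℕ) : ℂ) * (2 - αh - βh) = d * (-1 - s) := by
        push_cast; ring
      have e1 : -(d : ℂ) - (d : ℂ) * s - ((1 : ℕ) : ℂ) * (2 - αh - βh)
          = d * (-1 - s) + (αh + βh - 2) := by
        push_cast; ring
      rw [e0, e1, Complex.cpow_add _ _ hp0]
      simp only [pow_zero, pow_one, add_zero]
      ring)
    (fun x => (ArithmeticFunction.moebius x.2 : ℂ)
          * GSh (L₁ ++ αh :: L₂) (1 - αh) (x.2 * x.1)
          * GSh (M₁ ++ βh :: M₂) (1 - βh) (x.2 * x.1)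
          * (x.1 : ℂ) ^ (-1 - s) * (x.2 : ℂ) ^ (αh + βh - 2))
    (fun x => by ring)
  have hP : HasProd (fun p : Nat.Primes => ((L₁ ++ L₂).map (fun a =>
            ((M₁ ++ M₂).map (fun b => 1 - ((p : ℕ) : ℂ) ^ (-1 - a - b - s))).prod)).prod)
      (((L₁ ++ L₂).map (fun a =>
            ((M₁ ++ M₂).map (fun b => riemannZeta (1 + s + a + b))).prod)).prod)⁻¹ := by
    refine hasProd_list (L₁ ++ L₂) (fun a (p : Nat.Primes) => ((M₁ ++ M₂).map (fun b =>
      1 - ((p : ℕ) : ℂ) ^ (-1 - a - b - s))).prod) _ fun a ha => ?_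
    refine hasProd_list (M₁ ++ M₂) (fun b (p : Nat.Primes) =>
      1 - ((p : ℕ) : ℂ) ^ (-1 - a - b - s)) _ fun b hb => ?_
    have := hasProd_zeta (z := 1 + s + a + b) (by have := hre ha hb; linarith)
    rwa [show -(1 + s + a + b) = -1 - a - b - s by ring] at this
  have hPs : Summable (fun p : Nat.Primes => ‖((L₁ ++ L₂).map (fun a =>
            ((M₁ ++ M₂).map (fun b => 1 - ((p : ℕ) : ℂ) ^ (-1 - a - b - s))).prod)).prod - 1‖) := by
    refine summable_list (L₁ ++ L₂) (fun a (p : Nat.Primes) => ((M₁ ++ M₂).map (fun b =>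
      1 - ((p : ℕ) : ℂ) ^ (-1 - a - b - s))).prod) fun a ha => ?_
    refine summable_list (M₁ ++ M₂) (fun b (p : Nat.Primes) =>
      1 - ((p : ℕ) : ℂ) ^ (-1 - a - b - s)) fun b hb => ?_
    refine Summable.of_nonneg_of_le (fun _ => norm_nonneg _) (fun p => ?_) hsumrpow
    have h2 := two_le_prime p.2
    rw [sub_sub_cancel_left, norm_neg, Complex.norm_natCast_cpow_of_pos p.2.pos]
    apply Real.rpow_le_rpow_of_exponent_le (by linarith)
    have := hre ha hb
    simp at this ⊢; linarith
  have hZ : ((L₁ ++ L₂).map (fun a =>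
      ((M₁ ++ M₂).map (fun b => riemannZeta (1 + s + a + b))).prod)).prod ≠ 0 := by
    refine List.prod_ne_zero fun h => ?_
    obtain ⟨a, ha, h⟩ := List.mem_map.1 h
    refine List.prod_ne_zero (fun h => ?_) h
    obtain ⟨b, hb, h⟩ := List.mem_map.1 h
    exact riemannZeta_ne_zero_of_one_le_re (by have := hre ha hb; linarith) h
  refine ⟨h1, ?_, ?_⟩
  · exact summable_mul_sub_one hPs (Summable.of_nonneg_of_le (fun _ => norm_nonneg _)
      (fun p : Nat.Primes => h2 p p.2) (hsumrpow.mul_left _))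
  · rw [(hP.mul h3).tprod_eq, mul_inv_cancel_left₀ hZ]
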